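/- arXiv:2603.29253 — 2 statements merged into one kernel-verified Lean document; each statement's English description precedes it below -/
import Mathlib

section
/- Let Q = conv{(1,0),(2,1),(1,2),(0,1)} ⊂ ℝ²_{≥0} (the translate by (1,1) of the ℓ¹ unit ball of ℝ²). Then there exists a symplectic embedding of the open ball B⁴(√(2/π)) (which has Gromov area πr² = 2) into X_{int(Q)} = μ⁻¹(interior(Q)); in particular the Gromov width of X_{int(Q)} is at least 2. -/
open Set
open scoped Pointwise ENNReal

noncomputable section

/-- The standard symplectic form `ω₀` on `ℝ⁴ ≅ ℂ²`:
`ω₀(u,v) = Σⱼ (u_{xⱼ} v_{yⱼ} - u_{yⱼ} v_{xⱼ}) = Σⱼ Im(conj(uⱼ) · vⱼ)`. -/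
def stdSymp4 (u v : ℂ × ℂ) : ℝ :=
  ((starRingEnd ℂ) u.1 * v.1).im + ((starRingEnd ℂ) u.2 * v.2).im

/-- `U` symplectically embeds into `V` inside `ℝ⁴ ≅ ℂ²`: there is a smooth injective
map on `U` with image in `V` whose derivative preserves `ω₀`. -/
def SymplecticEmbeds4 (U V : Set (ℂ × ℂ)) : Prop :=
  ∃ f : ℂ × ℂ → ℂ × ℂ,
    ContDiffOn ℝ (⊤ : ℕ∞) f U ∧ Set.InjOn f U ∧ Set.MapsTo f U V ∧
    ∀ x ∈ U, ∀ u v : ℂ × ℂ,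
      stdSymp4 (fderivWithin ℝ f U x u) (fderivWithin ℝ f U x v) = stdSymp4 u v

/-- The moment map `μ : ℂ² → ℝ²`, `μ(z) = π(|z₁|², |z₂|²)`. -/
def mu4 (z : ℂ × ℂ) : ℝ × ℝ :=
  (Real.pi * Complex.normSq z.1, Real.pi * Complex.normSq z.2)

/-- The open Euclidean ball `B⁴(r) ⊆ ℂ²`. -/
def ball4 (r : ℝ) : Set (ℂ × ℂ) :=
  {z | Complex.normSq z.1 + Complex.normSq z.2 < r ^ 2}

/-- The open symplectic cylinder `Z⁴(r) = {z ∈ ℂ² : |z₁| < r}`. -/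
def cyl4 (r : ℝ) : Set (ℂ × ℂ) :=
  {z | Complex.normSq z.1 < r ^ 2}

/-- A normalized symplectic capacity on subsets of `ℝ⁴ ≅ ℂ²`: monotone under
symplectic embeddings, conformal, and normalized on balls and cylinders. -/
def IsNormalizedCapacity4 (c : Set (ℂ × ℂ) → ℝ≥0∞) : Prop :=
  (∀ U V : Set (ℂ × ℂ), SymplecticEmbeds4 U V → c U ≤ c V) ∧
  (∀ lam : ℝ, 0 < lam → ∀ U : Set (ℂ × ℂ),
    c (lam • U) = ENNReal.ofReal (lam ^ 2) * c U) ∧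
  (∀ r : ℝ, 0 < r →
    c (ball4 r) = ENNReal.ofReal (Real.pi * r ^ 2) ∧
    c (cyl4 r) = ENNReal.ofReal (Real.pi * r ^ 2))

/-- The Gromov width of `U ⊆ ℝ⁴`:
`c_Gr(U) = sup { πr² : B⁴(r) symplectically embeds into U }`. -/
def gromovWidth4 (U : Set (ℂ × ℂ)) : ℝ :=
  sSup {t : ℝ | ∃ r : ℝ, 0 < r ∧ t = Real.pi * r ^ 2 ∧ SymplecticEmbeds4 (ball4 r) U}

/-!
Fibrewise squeezing of `z₂`, with a factor depending smoothly on `|z₁|²`, becomes symplectic once it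
is compensated by a rotation of `z₁`; as this rotation keeps `|z₁|`, later maps still see the same
fibres. A family of ellipses of area `2 k` whose squared horizontal semi-axis depends smoothly on
`|z₁|²` can thus be squeezed to semi-axis `1` and wrapped, by one area-preserving map, onto the
slit annuli `|π |w|² - 1| < k`; here `k` need not be smooth.

The fibres of the ball over `z₁` are round discs, so the ball embeds into
`|π |z₂|² - 1| < 1 - π |z₁|² / 2`. This set is fibred over `z₂` by round discs in `z₁`, but their
radii are no longer smooth in `|z₂|²`. An area-preserving map of the disc, obtained from two maps
that pull the area form back to the same form, takes all concentric discs into ellipses whose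
squared horizontal semi-axes are smooth in `|z₂|²`. Wrapping these gives
`|π |z₁|² - 1| + |π |z₂|² - 1| < 1`.
-/

section Development

open Complex Filter Topology MeasureTheory
open scoped ContDiff Real

section SymplecticMaps

variable {E F : Type*} [NormedAddCommGroup E] [NormedSpace ℝ E]
  [NormedAddCommGroup F] [NormedSpace ℝ F]

/-- `f` is smooth and injective on `s` and its derivative preserves `σ` there. Smoothness is asked
in a neighbourhood of each point, so that `fderiv` is meaningful and `s` need not be open. -/
structure IsSymplecticOn (σ : E → E → ℝ) (f : E → E) (s : Set E) : Prop where
  injOn : InjOn f s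
  contDiffAt : ∀ x ∈ s, ContDiffAt ℝ ∞ f x
  map_form : ∀ x ∈ s, ∀ u v, σ (fderiv ℝ f x u) (fderiv ℝ f x v) = σ u v

namespace IsSymplecticOn

variable {σ : E → E → ℝ} {f g : E → E} {s t : Set E}

lemma differentiableAt (hf : IsSymplecticOn σ f s) {x : E} (hx : x ∈ s) :
    DifferentiableAt ℝ f x :=
  (hf.contDiffAt x hx).differentiableAt (by simp)

lemma id (σ : E → E → ℝ) (s : Set E) : IsSymplecticOn σ id s :=
  ⟨injOn_id s, fun _ _ => contDiffAt_id, fun x _ u v => by simp⟩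

lemma mono (hf : IsSymplecticOn σ f s) (hts : t ⊆ s) : IsSymplecticOn σ f t :=
  ⟨hf.injOn.mono hts, fun x hx => hf.contDiffAt x (hts hx), fun x hx => hf.map_form x (hts hx)⟩

lemma comp (hg : IsSymplecticOn σ g t) (hf : IsSymplecticOn σ f s) (hst : MapsTo f s t) :
    IsSymplecticOn σ (g ∘ f) s := by
  refine ⟨hg.injOn.comp hf.injOn hst,
    fun x hx => (hg.contDiffAt _ (hst hx)).comp x (hf.contDiffAt x hx), fun x hx u v => ?_⟩
  rw [fderiv_comp x (hg.differentiableAt (hst hx)) (hf.differentiableAt hx)]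
  simp only [ContinuousLinearMap.comp_apply, hg.map_form _ (hst hx), hf.map_form x hx]

lemma prodMap {σ' : F → F → ℝ} {f' : F → F} {s' : Set F} (hf : IsSymplecticOn σ f s)
    (hf' : IsSymplecticOn σ' f' s') :
    IsSymplecticOn (fun u v : E × F => σ u.1 v.1 + σ' u.2 v.2) (Prod.map f f') (s ×ˢ s') := by
  refine ⟨hf.injOn.prodMap hf'.injOn,
    fun x hx => (hf.contDiffAt _ hx.1).prodMap' (hf'.contDiffAt _ hx.2), fun x hx u v => ?_⟩
  have hd := (hf.differentiableAt hx.1).hasFDerivAt.prodMap x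
    (hf'.differentiableAt hx.2).hasFDerivAt
  simp [hd.fderiv, hf.map_form _ hx.1, hf'.map_form _ hx.2]

lemma prodSwap (σ : E → E → ℝ) (s : Set (E × E)) :
    IsSymplecticOn (fun u v : E × E => σ u.1 v.1 + σ u.2 v.2) Prod.swap s := by
  refine ⟨Prod.swap_injective.injOn, fun x _ => contDiffAt_snd.prodMk contDiffAt_fst,
    fun x _ u v => ?_⟩
  have hd : HasFDerivAt (Prod.swap : E × E → E × E)
      ((ContinuousLinearMap.snd ℝ E E).prod (ContinuousLinearMap.fst ℝ E E)) x :=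
    hasFDerivAt_snd.prodMk hasFDerivAt_fst
  simp [hd.fderiv, add_comm]

end IsSymplecticOn

/-- The restriction of `f` to `s` as an `OpenPartialHomeomorph`, by the inverse function theorem. -/
def openPartialHomeomorphOfInjOn [CompleteSpace E] {f : E → F} {s : Set E} (hs : IsOpen s)
    (hinj : InjOn f s) (hsmooth : ∀ x ∈ s, ContDiffAt ℝ ∞ f x)
    (hinv : ∀ x ∈ s, (fderiv ℝ f x).IsInvertible) : OpenPartialHomeomorph E F :=
  OpenPartialHomeomorph.ofContinuousOpenRestrict (hinj.toPartialEquiv f s)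
    (fun x hx => (hsmooth x hx).continuousAt.continuousWithinAt)
    (by
      refine IsOpenMap.of_nhds_le fun x => ?_
      obtain ⟨f', hf'⟩ := hinv x x.2
      have hstrict : HasStrictFDerivAt f (f' : E →L[ℝ] F) x :=
        hf' ▸ (hsmooth x x.2).hasStrictFDerivAt (by simp)
      change 𝓝 (f x) ≤ map (f ∘ Subtype.val) (𝓝 x)
      rw [← Filter.map_map, map_nhds_subtype_coe_eq_nhds x.2 (hs.mem_nhds x.2),
        hstrict.map_nhds_eq_of_equiv])
    hs

lemma isSymplecticOn_comp_invFunOn [CompleteSpace E] {σ : E → E → ℝ} {A B : E → E} {s : Set E}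
    (hs : IsOpen s) (hA : InjOn A s) (hB : InjOn B s) (hA' : ∀ x ∈ s, ContDiffAt ℝ ∞ A x)
    (hB' : ∀ x ∈ s, ContDiffAt ℝ ∞ B x) (hinv : ∀ x ∈ s, (fderiv ℝ A x).IsInvertible)
    (hAB : ∀ x ∈ s, ∀ u v,
      σ (fderiv ℝ B x u) (fderiv ℝ B x v) = σ (fderiv ℝ A x u) (fderiv ℝ A x v)) :
    IsSymplecticOn σ (B ∘ Function.invFunOn A s) (A '' s) := by
  let e := openPartialHomeomorphOfInjOn hs hA hA' hinv
  have hmem {y : E} (hy : y ∈ A '' s) : Function.invFunOn A s y ∈ s := Function.invFunOn_mem hy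
  refine ⟨hB.comp hA.bijOn_image.invOn_invFunOn.2.injOn fun _ => hmem,
    fun y hy => ?_, fun y hy u v => ?_⟩
  all_goals
    obtain ⟨A', hA'eq⟩ := hinv _ (hmem hy)
    have hderiv : HasFDerivAt A (A' : E →L[ℝ] E) (Function.invFunOn A s y) :=
      hA'eq ▸ ((hA' _ (hmem hy)).differentiableAt (by simp)).hasFDerivAt
  · exact (hB' _ (hmem hy)).comp y (e.contDiffAt_symm hy hderiv (hA' _ (hmem hy)))
  · have hcomp := ((hB' _ (hmem hy)).differentiableAt (by simp)).hasFDerivAt.comp y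
      (e.hasFDerivAt_symm hy hderiv)
    rw [hcomp.fderiv]
    simp [hAB _ (hmem hy), ← hA'eq]

end SymplecticMaps

section FibredSqueezing

/-- The standard area form on `ℂ`, so that `stdSymp4` is the sum of its two pullbacks. -/
def stdSymp2 (u v : ℂ) : ℝ := (starRingEnd ℂ u * v).im

lemma stdSymp2_apply (u v : ℂ) : stdSymp2 u v = u.re * v.im - u.im * v.re := by
  simp [stdSymp2, sub_eq_add_neg]

@[fun_prop]
lemma contDiff_complex_re : ContDiff ℝ ∞ re := reCLM.contDiff

@[fun_prop]
lemma contDiff_complex_im : ContDiff ℝ ∞ im := imCLM.contDiff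

@[fun_prop]
lemma contDiff_complex_ofReal : ContDiff ℝ ∞ (ofReal : ℝ → ℂ) := ofRealCLM.contDiff

@[fun_prop]
lemma contDiff_normSq : ContDiff ℝ ∞ normSq := by
  have h : ContDiff ℝ ∞ fun z : ℂ => z.re * z.re + z.im * z.im := by fun_prop
  exact (funext normSq_apply) ▸ h

@[fun_prop]
lemma differentiable_normSq : Differentiable ℝ normSq := contDiff_normSq.differentiable (by simp)

lemma normSq_exp_ofReal_mul_I_mul (θ : ℝ) (z : ℂ) : normSq (exp (θ * I) * z) = normSq z := by
  simp only [normSq_eq_norm_sq, norm_mul, norm_exp_ofReal_mul_I, one_mul]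

section

variable {F : Type*} [NormedAddCommGroup F] [NormedSpace ℝ F]

/-- The wedge product `α ∧ β` of two real covectors. -/
def wedge (α β : F →L[ℝ] ℝ) (u v : F) : ℝ := α u * β v - α v * β u

lemma fderiv_normSq_comp {Z : F → ℂ} {x : F} (hZ : DifferentiableAt ℝ Z x) (u : F) :
    fderiv ℝ (fun y => normSq (Z y)) x u =
      2 * ((Z x).re * (fderiv ℝ Z x u).re + (Z x).im * (fderiv ℝ Z x u).im) := by
  have hre := reCLM.hasFDerivAt.comp x hZ.hasFDerivAt
  have him := imCLM.hasFDerivAt.comp x hZ.hasFDerivAt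
  have h : HasFDerivAt (fun y => (Z y).re * (Z y).re + (Z y).im * (Z y).im) _ x :=
    (hre.mul hre).add (him.mul him)
  simp only [normSq_apply]
  simp only [h.fderiv, Function.comp_apply, reCLM_apply, imCLM_apply, add_apply, smul_apply,
    ContinuousLinearMap.comp_apply, smul_eq_mul]
  ring

lemma fderiv_re_mul_im_comp {Z : F → ℂ} {x : F} (hZ : DifferentiableAt ℝ Z x) (u : F) :
    fderiv ℝ (fun y => (Z y).re * (Z y).im) x u =
      (Z x).re * (fderiv ℝ Z x u).im + (Z x).im * (fderiv ℝ Z x u).re := by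
  have h := (reCLM.hasFDerivAt.comp x hZ.hasFDerivAt).mul
    (imCLM.hasFDerivAt.comp x hZ.hasFDerivAt)
  have h' : HasFDerivAt (fun y => (Z y).re * (Z y).im) _ x := h
  simp [h'.fderiv]

/-- In polar coordinates the area form is `d(|z|²/2) ∧ dφ`, and only `φ` is changed. -/
lemma stdSymp2_fderiv_exp_mul {θ : F → ℝ} {Z : F → ℂ} {x : F} (hθ : DifferentiableAt ℝ θ x)
    (hZ : DifferentiableAt ℝ Z x) (u v : F) :
    stdSymp2 (fderiv ℝ (fun y => exp (θ y * I) * Z y) x u)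
        (fderiv ℝ (fun y => exp (θ y * I) * Z y) x v) =
      stdSymp2 (fderiv ℝ Z x u) (fderiv ℝ Z x v) +
        wedge (fderiv ℝ (fun y => normSq (Z y)) x) (fderiv ℝ θ x) u v / 2 := by
  have hexp : HasFDerivAt (fun y => exp (θ y * I)) _ x :=
    ((ofRealCLM.hasFDerivAt.comp x hθ.hasFDerivAt).mul_const I).cexp
  have hderiv (w : F) : fderiv ℝ (fun y => exp (θ y * I) * Z y) x w =
      exp (θ x * I) * (fderiv ℝ Z x w + fderiv ℝ θ x w * I * Z x) := by
    have h : HasFDerivAt (fun y => exp (θ y * I) * Z y) _ x := hexp.mul hZ.hasFDerivAt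
    simp only [h.fderiv, Function.comp_apply, ofRealCLM_apply, add_apply, smul_apply, smul_eq_mul,
      ContinuousLinearMap.comp_apply]
    ring
  have hrot (a b : ℂ) : stdSymp2 (exp (θ x * I) * a) (exp (θ x * I) * b) = stdSymp2 a b := by
    have h1 := normSq_exp_ofReal_mul_I_mul (θ x) 1
    rw [mul_one, normSq_one, normSq_apply] at h1
    simp only [stdSymp2_apply, mul_re, mul_im]
    linear_combination (a.re * b.im - a.im * b.re) * h1
  simp only [hderiv, hrot, wedge, fderiv_normSq_comp hZ]
  simp only [stdSymp2_apply, add_re, mul_re, ofReal_re, I_re, mul_zero, ofReal_im, I_im, mul_one,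
    sub_self, zero_mul, mul_im, add_zero, zero_sub, add_im, zero_add]
  ring

/-- The linear map `x + iy ↦ x / √s + i √s y`, area preserving for `0 < s`. -/
def squeeze (s : ℝ) (z : ℂ) : ℂ := ⟨z.re / √s, z.im * √s⟩

lemma squeeze_injective {s : ℝ} (hs : 0 < s) : Function.Injective (squeeze s) := by
  have hs' := (Real.sqrt_pos.2 hs).ne'
  intro z w h
  simp only [squeeze, Complex.mk.injEq] at h
  exact Complex.ext ((div_left_inj' hs').1 h.1) (mul_right_cancel₀ hs' h.2)

lemma contDiffAt_squeeze {S : F → ℝ} {Z : F → ℂ} {x : F} (hS : ContDiffAt ℝ ∞ S x)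
    (hZ : ContDiffAt ℝ ∞ Z x) (hpos : 0 < S x) :
    ContDiffAt ℝ ∞ (fun y => squeeze (S y) (Z y)) x := by
  have hsqrt := hS.sqrt hpos.ne'
  have hre : ContDiffAt ℝ ∞ (fun y => (Z y).re / √(S y)) x :=
    ContDiffAt.div (by fun_prop) hsqrt (Real.sqrt_pos.2 hpos).ne'
  exact equivRealProdCLM.symm.contDiff.contDiffAt.comp x
    (hre.prodMk (g := fun y => (Z y).im * √(S y)) (by fun_prop))

/-- With `s = √S`, `d(x / s) ∧ d(s y) = dx ∧ dy + d(xy) ∧ ds / s`. -/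
lemma stdSymp2_fderiv_squeeze {S : F → ℝ} {Z : F → ℂ} {x : F} (hS : DifferentiableAt ℝ S x)
    (hZ : DifferentiableAt ℝ Z x) (hpos : 0 < S x) (u v : F) :
    stdSymp2 (fderiv ℝ (fun y => squeeze (S y) (Z y)) x u)
        (fderiv ℝ (fun y => squeeze (S y) (Z y)) x v) =
      stdSymp2 (fderiv ℝ Z x u) (fderiv ℝ Z x v) +
        wedge (fderiv ℝ (fun y => (Z y).re * (Z y).im) x) (fderiv ℝ S x) u v / (2 * S x) := by
  have hs := Real.sqrt_pos.2 hpos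
  have hsqrt := hS.hasFDerivAt.sqrt hpos.ne'
  have hre := (reCLM.hasFDerivAt.comp x hZ.hasFDerivAt).mul
    ((hasDerivAt_inv hs.ne').comp_hasFDerivAt x hsqrt)
  have him := (imCLM.hasFDerivAt.comp x hZ.hasFDerivAt).mul hsqrt
  have hd : HasFDerivAt (fun y => squeeze (S y) (Z y)) _ x :=
    equivRealProdCLM.symm.hasFDerivAt.comp x (hre.prodMk him)
  simp only [hd.fderiv, wedge, fderiv_re_mul_im_comp hZ]
  simp only [Function.comp_apply, reCLM_apply, one_div, mul_inv_rev, neg_smul, smul_neg,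
    imCLM_apply, ContinuousLinearMap.comp_apply, ContinuousLinearMap.prod_apply, add_apply,
    neg_apply, smul_apply, smul_eq_mul, ContinuousLinearEquiv.coe_coe, stdSymp2_apply,
    equivRealProdCLM_symm_apply_re, equivRealProdCLM_symm_apply_im]
  have hsq := Real.sq_sqrt hpos.le
  generalize √(S x) = s at *
  rw [← hsq]
  field_simp
  ring

end

/-- `squeeze (S |z₁|²)` acting on `z₂`, made symplectic by a compensating rotation of `z₁`. -/
def twist (S : ℝ → ℝ) (z : ℂ × ℂ) : ℂ × ℂ :=
  (exp ((z.2.re * z.2.im * logDeriv S (normSq z.1) : ℝ) * I) * z.1,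
    squeeze (S (normSq z.1)) z.2)

lemma normSq_fst_twist (S : ℝ → ℝ) (z : ℂ × ℂ) : normSq (twist S z).1 = normSq z.1 :=
  normSq_exp_ofReal_mul_I_mul _ _

lemma injOn_twist (S : ℝ → ℝ) : InjOn (twist S) {z | 0 < S (normSq z.1)} := by
  intro z hz w _ h
  have hN : normSq z.1 = normSq w.1 := by rw [← normSq_fst_twist S, h, normSq_fst_twist]
  simp only [twist, ← hN, Prod.mk.injEq] at h
  have h2 : z.2 = w.2 := squeeze_injective hz h.2
  rw [h2] at h
  exact Prod.ext (mul_left_cancel₀ (exp_ne_zero _) h.1) h2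

lemma isSymplecticOn_twist {S : ℝ → ℝ} (hS : ContDiff ℝ ∞ S) :
    IsSymplecticOn stdSymp4 (twist S) {z | 0 < S (normSq z.1)} := by
  have hlog {z : ℂ × ℂ} (hz : 0 < S (normSq z.1)) : ContDiffAt ℝ ∞ (logDeriv S) (normSq z.1) :=
    (contDiff_infty_iff_deriv.1 hS).2.contDiffAt.div hS.contDiffAt hz.ne'
  have hN : ContDiff ℝ ∞ fun z : ℂ × ℂ => normSq z.1 := by fun_prop
  have hP : ContDiff ℝ ∞ fun z : ℂ × ℂ => z.2.re * z.2.im := by fun_prop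
  have hSN : ContDiff ℝ ∞ fun z : ℂ × ℂ => S (normSq z.1) := hS.comp hN
  have hθ {z : ℂ × ℂ} (hz : 0 < S (normSq z.1)) :
      ContDiffAt ℝ ∞ (fun y : ℂ × ℂ => y.2.re * y.2.im * logDeriv S (normSq y.1)) z :=
    hP.contDiffAt.mul ((hlog hz).comp z hN.contDiffAt)
  have hrot {z : ℂ × ℂ} (hz : 0 < S (normSq z.1)) : ContDiffAt ℝ ∞ (fun y => (twist S y).1) z := by
    have := hθ hz
    unfold twist
    fun_prop
  have hsq {z : ℂ × ℂ} (hz : 0 < S (normSq z.1)) : ContDiffAt ℝ ∞ (fun y => (twist S y).2) z :=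
    contDiffAt_squeeze hSN.contDiffAt contDiffAt_snd hz
  refine ⟨injOn_twist S, fun z hz => (hrot hz).prodMk (hsq hz), fun z hz u v => ?_⟩
  replace hz : 0 < S (normSq z.1) := hz
  have hNd := (hN.differentiable (by simp) z).hasFDerivAt
  have hPd := (hP.differentiable (by simp) z).hasFDerivAt
  have hSd := (hS.differentiable (by simp) (normSq z.1)).hasDerivAt.comp_hasFDerivAt z hNd
  have hθd := hPd.mul (((hlog hz).differentiableAt (by simp)).hasDerivAt.comp_hasFDerivAt z hNd)
  have hfst := stdSymp2_fderiv_exp_mul hθd.differentiableAt differentiableAt_fst u v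
  have hsnd := stdSymp2_fderiv_squeeze hSd.differentiableAt differentiableAt_snd hz u v
  have hd : fderiv ℝ (twist S) z = _ :=
    ((hrot hz).differentiableAt (by simp)).fderiv_prodMk ((hsq hz).differentiableAt (by simp))
  rw [hd]
  change stdSymp2 _ _ + stdSymp2 _ _ = stdSymp2 _ _ + stdSymp2 _ _
  refine (congrArg₂ (· + ·) hfst hsnd).trans ?_
  rw [hθd.fderiv, hSd.fderiv]
  simp only [fderiv_fst, ContinuousLinearMap.coe_fst', wedge, Function.comp_apply, logDeriv_apply,
    add_apply, smul_apply, smul_eq_mul, fderiv_snd, ContinuousLinearMap.coe_snd']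
  field_simp
  ring

end FibredSqueezing

section EllipseToAnnulus

/-- The open ellipse of area `2 k` around `0` with horizontal semi-axis `√S`, empty unless `S` and
`k` are positive. -/
def ellipse (S k : ℝ) : Set ℂ :=
  {w | 0 < S ∧ 0 < k ∧ w.re ^ 2 / S + S * (π / (2 * k) * w.im) ^ 2 < 1}

lemma squeeze_mem_ellipse {s S k : ℝ} {w : ℂ} (hs : 0 < s) :
    squeeze s w ∈ ellipse (S / s) k ↔ w ∈ ellipse S k := by
  have hsq := Real.sq_sqrt hs.le
  have h1 : (w.re / √s) ^ 2 / (S / s) = w.re ^ 2 / S := by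
    rw [div_pow, hsq]
    field_simp
  have h2 : S / s * (π / (2 * k) * (w.im * √s)) ^ 2 = S * (π / (2 * k) * w.im) ^ 2 := by
    rw [← mul_assoc, mul_pow _ √s, hsq]
    field_simp
  simp only [ellipse, squeeze, mem_ofPred_eq, h1, h2, div_pos_iff_of_pos_right hs]

lemma mem_ellipse_round_iff {S : ℝ} {w : ℂ} (hS : 0 < S) :
    w ∈ ellipse S (π / 2 * S) ↔ normSq w < S := by
  have h : w.re ^ 2 / S + S * (π / (2 * (π / 2 * S)) * w.im) ^ 2 = normSq w / S := by
    rw [normSq_apply]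
    field_simp
  simp only [ellipse, mem_ofPred_eq, h, div_lt_one hS]
  exact ⟨fun h => h.2.2, fun h => ⟨hS, by positivity, h⟩⟩

/-- Twice the signed area of the unit disc between the vertical lines through `0` and `x`. -/
def wrapAngle (x : ℝ) : ℝ := 2 * (x * √(1 - x ^ 2) + Real.arcsin x)

lemma hasDerivAt_wrapAngle {x : ℝ} (hx : x ^ 2 < 1) :
    HasDerivAt wrapAngle (4 * √(1 - x ^ 2)) x := by
  have hpos : 0 < 1 - x ^ 2 := by linarith
  obtain ⟨hl, hr⟩ := abs_lt.1 ((sq_lt_one_iff_abs_lt_one x).1 hx)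
  have hsqrt := ((hasDerivAt_pow 2 x).const_sub 1).sqrt hpos.ne'
  have h : HasDerivAt wrapAngle _ x := (((hasDerivAt_id x).mul hsqrt).add
    (Real.hasDerivAt_arcsin hl.ne' hr.ne)).const_mul 2
  refine h.congr_deriv ?_
  have hs := Real.sqrt_pos.2 hpos
  have hsq := Real.sq_sqrt hpos.le
  generalize √(1 - x ^ 2) = s at *
  simp only [id_eq, Nat.cast_ofNat]
  field_simp
  linear_combination -2 * hsq

lemma strictMonoOn_wrapAngle : StrictMonoOn wrapAngle (Icc (-1) 1) := by
  refine strictMonoOn_of_deriv_pos (convex_Icc _ _) ?_ fun x hx => ?_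
  · unfold wrapAngle
    fun_prop
  · rw [interior_Icc] at hx
    have hx' : x ^ 2 < 1 := (sq_lt_one_iff_abs_lt_one x).2 (abs_lt.2 hx)
    rw [(hasDerivAt_wrapAngle hx').deriv]
    have : 0 < 1 - x ^ 2 := by linarith
    positivity

lemma wrapAngle_mem_Ioo {x : ℝ} (hx : x ^ 2 < 1) : wrapAngle x ∈ Ioo (-π) π := by
  obtain ⟨hl, hr⟩ := abs_lt.1 ((sq_lt_one_iff_abs_lt_one x).1 hx)
  have h1 : wrapAngle 1 = π := by
    simp only [wrapAngle, Real.arcsin_one]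
    norm_num
    ring
  have h2 : wrapAngle (-1) = -π := by
    simp only [wrapAngle, Real.arcsin_neg_one]
    norm_num
    ring
  rw [mem_Ioo, ← h2]
  conv_rhs => rw [← h1]
  exact ⟨strictMonoOn_wrapAngle ⟨le_rfl, by norm_num⟩ ⟨hl.le, hr.le⟩ hl,
    strictMonoOn_wrapAngle ⟨hl.le, hr.le⟩ ⟨by norm_num, le_rfl⟩ hr⟩

/-- The squared radius to which `wrap` sends `z`. -/
def wrapNormSq (z : ℂ) : ℝ := (1 - π / 2 * z.im / √(1 - z.re ^ 2)) / π

/-- The strip `{|x| < 1}` wrapped around `0`, vertical segments becoming radial ones. -/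
def wrap (z : ℂ) : ℂ := exp (wrapAngle z.re * I) * (√(wrapNormSq z) : ℝ)

lemma normSq_wrap {z : ℂ} (hz : 0 ≤ wrapNormSq z) : normSq (wrap z) = wrapNormSq z := by
  rw [wrap, normSq_exp_ofReal_mul_I_mul, normSq_ofReal, Real.mul_self_sqrt hz]

lemma injOn_wrap : InjOn wrap {z | z.re ^ 2 < 1 ∧ 0 < wrapNormSq z} := by
  rintro z ⟨hz, hzN⟩ w ⟨hw, hwN⟩ h
  have hN : wrapNormSq z = wrapNormSq w := by rw [← normSq_wrap hzN.le, h, normSq_wrap hwN.le]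
  have hsqrt : ((√(wrapNormSq w) : ℝ) : ℂ) ≠ 0 := ofReal_ne_zero.2 (Real.sqrt_pos.2 hwN).ne'
  simp only [wrap, hN] at h
  obtain ⟨hz1, hz2⟩ := wrapAngle_mem_Ioo hz
  obtain ⟨hw1, hw2⟩ := wrapAngle_mem_Ioo hw
  have hangle : wrapAngle z.re = wrapAngle w.re := by
    simpa using exp_inj_of_neg_pi_lt_of_le_pi (by simpa) (by simpa using hz2.le) (by simpa)
      (by simpa using hw2.le) (mul_right_cancel₀ hsqrt h)
  have hIcc {x : ℝ} (hx : x ^ 2 < 1) : x ∈ Icc (-1) 1 :=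
    abs_le.1 ((sq_lt_one_iff_abs_lt_one x).1 hx).le
  have hre : z.re = w.re := strictMonoOn_wrapAngle.injOn (hIcc hz) (hIcc hw) hangle
  have hs : √(1 - w.re ^ 2) ≠ 0 := (Real.sqrt_pos.2 (by linarith)).ne'
  simp only [wrapNormSq, hre] at hN
  field_simp at hN
  exact Complex.ext hre (mul_left_cancel₀ Real.pi_ne_zero (by linarith))

lemma contDiffAt_sqrt_one_sub_sq {x : ℝ} (hx : x ^ 2 < 1) :
    ContDiffAt ℝ ∞ (fun x : ℝ => √(1 - x ^ 2)) x :=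
  ContDiffAt.sqrt (f := fun x : ℝ => 1 - x ^ 2) (by fun_prop) (by linarith)

lemma contDiffAt_wrapAngle {x : ℝ} (hx : x ^ 2 < 1) : ContDiffAt ℝ ∞ wrapAngle x := by
  have hsqrt := contDiffAt_sqrt_one_sub_sq hx
  obtain ⟨hl, hr⟩ := abs_lt.1 ((sq_lt_one_iff_abs_lt_one _).1 hx)
  have harcsin : ContDiffAt ℝ ∞ Real.arcsin x := Real.contDiffAt_arcsin hl.ne' hr.ne
  unfold wrapAngle
  fun_prop

lemma contDiffAt_wrapNormSq {z : ℂ} (hz : z.re ^ 2 < 1) : ContDiffAt ℝ ∞ wrapNormSq z := by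
  have hsqrt := (contDiffAt_sqrt_one_sub_sq hz).comp z contDiff_complex_re.contDiffAt
  have hdiv : ContDiffAt ℝ ∞ (fun w => π / 2 * w.im / √(1 - w.re ^ 2)) z :=
    ContDiffAt.div (by fun_prop) hsqrt (Real.sqrt_pos.2 (by linarith)).ne'
  unfold wrapNormSq
  fun_prop

lemma isSymplecticOn_wrap :
    IsSymplecticOn stdSymp2 wrap {z | z.re ^ 2 < 1 ∧ 0 < wrapNormSq z} := by
  have hradius {z : ℂ} (hz : z.re ^ 2 < 1) (hN : 0 < wrapNormSq z) :
      ContDiffAt ℝ ∞ (fun w => √(wrapNormSq w)) z := (contDiffAt_wrapNormSq hz).sqrt hN.ne'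
  refine ⟨injOn_wrap, fun z ⟨hz, hN⟩ => ?_, fun z ⟨hz, hN⟩ u v => ?_⟩
  · have hr := hradius hz hN
    have hθ := (contDiffAt_wrapAngle hz).comp z contDiff_complex_re.contDiffAt
    simp only [Function.comp_def] at hθ
    unfold wrap
    fun_prop
  have hs : √(1 - z.re ^ 2) ≠ 0 := (Real.sqrt_pos.2 (by linarith)).ne'
  have hsqrt := (contDiffAt_sqrt_one_sub_sq hz).differentiableAt (by simp) |>.hasDerivAt
  have hθ := (hasDerivAt_wrapAngle hz).comp_hasFDerivAt z reCLM.hasFDerivAt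
  have hr := ofRealCLM.hasFDerivAt.comp z
    ((hradius hz hN).differentiableAt (by simp)).hasFDerivAt
  have hNd : HasFDerivAt wrapNormSq _ z :=
    ((((imCLM.hasFDerivAt (x := z)).const_mul (π / 2)).mul
      ((hsqrt.inv hs).comp_hasFDerivAt z reCLM.hasFDerivAt)).const_sub 1).mul_const π⁻¹
  have hnorm : (fun w => normSq (√(wrapNormSq w) : ℝ)) =ᶠ[𝓝 z] wrapNormSq := by
    filter_upwards [(contDiffAt_wrapNormSq hz).continuousAt.eventually_const_lt hN] with w hw
    rw [normSq_ofReal, Real.mul_self_sqrt hw.le]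
  refine (stdSymp2_fderiv_exp_mul hθ.differentiableAt hr.differentiableAt u v).trans ?_
  change stdSymp2 (fderiv ℝ (ofRealCLM ∘ fun w => √(wrapNormSq w)) z u) _ +
    wedge (fderiv ℝ (fun w => normSq (√(wrapNormSq w) : ℝ)) z) _ u v / 2 = _
  rw [hnorm.fderiv_eq, hNd.fderiv, hθ.fderiv, hr.fderiv]
  simp only [ContinuousLinearMap.comp_apply, ofRealCLM_apply, stdSymp2_apply, ofReal_re, ofReal_im,
    mul_zero, zero_mul, sub_self, wedge, imCLM_apply, Function.comp_apply, Pi.inv_apply,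
    neg_add_rev, smul_add, smul_neg, add_apply, neg_apply, smul_apply, smul_eq_mul, reCLM_apply,
    zero_add]
  field_simp
  ring

lemma mem_ellipse_one_iff {k : ℝ} {z : ℂ} :
    z ∈ ellipse 1 k ↔ z.re ^ 2 < 1 ∧ |π * wrapNormSq z - 1| < k := by
  have hN : π * wrapNormSq z - 1 = -(π / 2 * z.im / √(1 - z.re ^ 2)) := by
    simp only [wrapNormSq]
    field_simp
    ring
  have key (hz : z.re ^ 2 < 1) (hk : 0 < k) :
      |π * wrapNormSq z - 1| < k ↔ z.re ^ 2 + (π / (2 * k) * z.im) ^ 2 < 1 := by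
    have hs := Real.sqrt_pos.2 (sub_pos.2 hz)
    rw [hN, abs_neg, abs_div, abs_of_pos hs, div_lt_iff₀ hs, ← abs_of_pos (mul_pos hk hs),
      ← sq_lt_sq, mul_pow k, Real.sq_sqrt (sub_pos.2 hz).le, ← lt_sub_iff_add_lt',
      ← mul_lt_mul_iff_right₀ (pow_pos hk 2)]
    field_simp
  simp only [ellipse, mem_ofPred_eq, one_pos, true_and, div_one, one_mul]
  constructor
  · rintro ⟨hk, h⟩
    have hz : z.re ^ 2 < 1 := by linarith [sq_nonneg (π / (2 * k) * z.im)]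
    exact ⟨hz, (key hz hk).2 h⟩
  · rintro ⟨hz, h⟩
    have hk := (abs_nonneg _).trans_lt h
    exact ⟨hk, (key hz hk).1 h⟩

end EllipseToAnnulus

section Embeddings

variable {E : Type*} [NormedAddCommGroup E] [NormedSpace ℝ E]

/-- Some map that is symplectic on `U` takes it into `V`; as `IsSymplecticOn` looks at
neighbourhoods, this composes better than `SymplecticEmbeds4`, which differentiates within `U`. -/
def SymplecticallyEmbeds (σ : E → E → ℝ) (U V : Set E) : Prop :=
  ∃ f, IsSymplecticOn σ f U ∧ MapsTo f U V

lemma SymplecticallyEmbeds.of_subset (σ : E → E → ℝ) {U V : Set E} (h : U ⊆ V) :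
    SymplecticallyEmbeds σ U V := ⟨id, .id σ U, h⟩

lemma SymplecticallyEmbeds.trans {σ : E → E → ℝ} {U V W : Set E}
    (hUV : SymplecticallyEmbeds σ U V) (hVW : SymplecticallyEmbeds σ V W) :
    SymplecticallyEmbeds σ U W :=
  let ⟨f, hf, hfUV⟩ := hUV
  let ⟨g, hg, hgVW⟩ := hVW
  ⟨g ∘ f, hg.comp hf hfUV, hgVW.comp hfUV⟩

lemma SymplecticallyEmbeds.symplecticEmbeds4 {U V : Set (ℂ × ℂ)} (hU : IsOpen U)
    (h : SymplecticallyEmbeds stdSymp4 U V) : SymplecticEmbeds4 U V := by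
  obtain ⟨f, hf, hUV⟩ := h
  refine ⟨f, fun x hx => (hf.contDiffAt x hx).contDiffWithinAt, hf.injOn, hUV,
    fun x hx u v => ?_⟩
  rw [fderivWithin_of_isOpen hU hx, hf.map_form x hx]

/-- The fibres are first squeezed to semi-axis `1` and then wrapped around the origin. -/
lemma symplecticallyEmbeds_annuli_of_ellipses {S k : ℝ → ℝ} (hS : ContDiff ℝ ∞ S)
    (hk : ∀ n, 0 ≤ n → k n ≤ 1) :
    SymplecticallyEmbeds stdSymp4 {z | z.2 ∈ ellipse (S (normSq z.1)) (k (normSq z.1))}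
      {z | |π * normSq z.2 - 1| < k (normSq z.1)} := by
  have htwist : MapsTo (twist S) {z | z.2 ∈ ellipse (S (normSq z.1)) (k (normSq z.1))}
      {z | z.2 ∈ ellipse 1 (k (normSq z.1))} := by
    intro z hz
    simp only [mem_ofPred_eq, normSq_fst_twist]
    rw [← div_self hz.1.ne']
    exact (squeeze_mem_ellipse hz.1).2 hz
  have hwrap {z : ℂ × ℂ} (hz : z.2 ∈ ellipse 1 (k (normSq z.1))) : 0 < wrapNormSq z.2 := by
    have habs := (mem_ellipse_one_iff.1 hz).2.trans_le (hk _ (normSq_nonneg _))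
    exact pos_of_mul_pos_right (by linarith [(abs_lt.1 habs).1]) Real.pi_pos.le
  refine ⟨Prod.map id wrap ∘ twist S,
    ((IsSymplecticOn.id stdSymp2 univ).prodMap isSymplecticOn_wrap).comp
      ((isSymplecticOn_twist hS).mono fun z hz => hz.1) fun z hz => ?_, fun z hz => ?_⟩
  · exact ⟨mem_univ _, (mem_ellipse_one_iff.1 (htwist hz)).1, hwrap (htwist hz)⟩
  · have h := mem_ellipse_one_iff.1 (htwist hz)
    simpa only [mem_ofPred_eq, Function.comp_apply, Prod.map_fst, Prod.map_snd, id,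
      normSq_wrap (hwrap (htwist hz)).le] using h.2

end Embeddings

section DiscToEllipses

/-- The rotation, by an angle depending on the point, that pulls the area form back to the same
form as `discStretch c` does. -/
def discSlide (c : ℝ) (z : ℂ) : ℂ :=
  exp ((-(z.re * z.im / (c - normSq z)) : ℝ) * I) * z

/-- The map `x + iy ↦ x √T + i y / √T` with `T = c - |z|²`, which takes the circle of radius `√n`
to the ellipse with semi-axes `√(n (c - n))` and `√(n / (c - n))`. -/
def discStretch (c : ℝ) (z : ℂ) : ℂ := squeeze (c - normSq z)⁻¹ z

variable {c n : ℝ} {z : ℂ}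

lemma normSq_discSlide (c : ℝ) (z : ℂ) : normSq (discSlide c z) = normSq z :=
  normSq_exp_ofReal_mul_I_mul _ z

lemma contDiffAt_discSlide (hz : normSq z < c) : ContDiffAt ℝ ∞ (discSlide c) z := by
  have hT : ContDiffAt ℝ ∞ (fun z => z.re * z.im / (c - normSq z)) z :=
    ContDiffAt.div (by fun_prop) (by fun_prop) (sub_pos.2 hz).ne'
  unfold discSlide
  fun_prop

lemma contDiffAt_discStretch (hz : normSq z < c) : ContDiffAt ℝ ∞ (discStretch c) z :=
  contDiffAt_squeeze (ContDiffAt.inv (f := fun z => c - normSq z) (by fun_prop) (sub_pos.2 hz).ne')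
    contDiffAt_id (inv_pos.2 (sub_pos.2 hz))

lemma hasFDerivAt_inv_sub_normSq (hz : normSq z < c) :
    HasFDerivAt (fun w => (c - normSq w)⁻¹) (((c - normSq z) ^ 2)⁻¹ • fderiv ℝ normSq z) z := by
  have h := (hasDerivAt_inv (sub_pos.2 hz).ne').comp_hasFDerivAt_of_eq z
    ((differentiable_normSq z).hasFDerivAt.const_sub c) rfl
  simpa [Function.comp_def] using h

lemma wedge_normSq_re_mul_im (z u v : ℂ) :
    wedge (fderiv ℝ normSq z) (fderiv ℝ (fun w => w.re * w.im) z) u v =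
      2 * (z.re ^ 2 - z.im ^ 2) * stdSymp2 u v := by
  have hN := fderiv_normSq_comp (Z := fun w : ℂ => w) (x := z) differentiableAt_id
  have hP := fderiv_re_mul_im_comp (Z := fun w : ℂ => w) (x := z) differentiableAt_id
  simp only [wedge, hN, hP, fderiv_fun_id, stdSymp2_apply]
  simp only [ContinuousLinearMap.id_apply]
  ring

lemma stdSymp2_fderiv_discSlide (hz : normSq z < c) (u v : ℂ) :
    stdSymp2 (fderiv ℝ (discSlide c) z u) (fderiv ℝ (discSlide c) z v) =
      (1 - (z.re ^ 2 - z.im ^ 2) / (c - normSq z)) * stdSymp2 u v := by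
  have hP : DifferentiableAt ℝ (fun w : ℂ => w.re * w.im) z := by fun_prop
  have hθ : HasFDerivAt (fun w => -(w.re * w.im / (c - normSq w))) _ z :=
    (hP.hasFDerivAt.mul (hasFDerivAt_inv_sub_normSq hz)).neg
  refine (stdSymp2_fderiv_exp_mul hθ.differentiableAt differentiableAt_id u v).trans ?_
  have hT := (sub_pos.2 hz).ne'
  have hwedge := wedge_normSq_re_mul_im z u v
  simp only [wedge] at hwedge
  rw [hθ.fderiv]
  simp only [fderiv_id, ContinuousLinearMap.id_apply, wedge, id_eq, neg_add_rev, add_apply,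
    neg_apply, smul_apply, smul_eq_mul]
  eta_reduce
  field_simp
  linear_combination -(c - normSq z) * hwedge

lemma stdSymp2_fderiv_discStretch (hz : normSq z < c) (u v : ℂ) :
    stdSymp2 (fderiv ℝ (discStretch c) z u) (fderiv ℝ (discStretch c) z v) =
      (1 - (z.re ^ 2 - z.im ^ 2) / (c - normSq z)) * stdSymp2 u v := by
  have hS := hasFDerivAt_inv_sub_normSq hz
  refine (stdSymp2_fderiv_squeeze hS.differentiableAt differentiableAt_id
    (inv_pos.2 (sub_pos.2 hz)) u v).trans ?_
  have hT := (sub_pos.2 hz).ne'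
  have hwedge := wedge_normSq_re_mul_im z u v
  simp only [wedge] at hwedge
  rw [hS.fderiv]
  simp only [fderiv_id, ContinuousLinearMap.id_apply, wedge, id_eq, smul_apply, smul_eq_mul]
  field_simp
  linear_combination -hwedge

lemma isInvertible_of_stdSymp2_map {L : ℂ →L[ℝ] ℂ} {J : ℝ} (hJ : J ≠ 0)
    (hL : ∀ u v, stdSymp2 (L u) (L v) = J * stdSymp2 u v) : L.IsInvertible := by
  have hinj : Function.Injective L := by
    refine (injective_iff_map_eq_zero L).2 fun u hu => ?_
    have h (v : ℂ) : stdSymp2 u v = 0 := by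
      have h0 := hL u v
      rw [hu] at h0
      simpa [stdSymp2, hJ] using h0
    exact Complex.ext (by simpa [stdSymp2_apply] using h I) (by simpa [stdSymp2_apply] using h 1)
  exact ⟨(LinearEquiv.ofInjectiveEndo L.toLinearMap hinj).toContinuousLinearEquiv, rfl⟩

lemma isInvertible_fderiv_discSlide (hz : normSq z < c / 2) :
    (fderiv ℝ (discSlide c) z).IsInvertible := by
  have hN := normSq_nonneg z
  refine isInvertible_of_stdSymp2_map (ne_of_gt ?_) (stdSymp2_fderiv_discSlide (by linarith))
  rw [sub_pos, div_lt_one (by linarith)]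
  rw [normSq_apply] at *
  nlinarith [sq_nonneg z.im]

/-- The angle by which `discSlide c` turns `exp (it) ζ` clockwise. -/
def discAngle (c : ℝ) (ζ : ℂ) (t : ℝ) : ℝ :=
  (exp (t * I) * ζ).re * (exp (t * I) * ζ).im / (c - normSq ζ)

lemma contractingWith_discAngle {ζ : ℂ} (hζ : normSq ζ < c / 2) :
    ContractingWith (normSq ζ / (c - normSq ζ)).toNNReal (discAngle c ζ) := by
  have hT : 0 < c - normSq ζ := by linarith [normSq_nonneg ζ]
  have hK : 0 ≤ normSq ζ / (c - normSq ζ) := div_nonneg (normSq_nonneg _) hT.le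
  have hK1 : normSq ζ / (c - normSq ζ) < 1 := by rw [div_lt_one hT]; linarith
  refine ⟨by simpa using hK1, LipschitzWith.of_dist_le_mul fun t s => ?_⟩
  have hP (w : ℂ) : w.re * w.im = (w ^ 2).im / 2 := by
    rw [sq, mul_im]
    ring
  have hfactor : (exp (t * I) * ζ) ^ 2 - (exp (s * I) * ζ) ^ 2 =
      exp ((2 * s : ℝ) * I) * (exp (I * (2 * (t - s) : ℝ)) - 1) * ζ ^ 2 := by
    rw [mul_sub, ← exp_add, mul_pow, mul_pow, ← exp_nat_mul, ← exp_nat_mul, mul_one, sub_mul]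
    push_cast
    ring_nf
  have hdiff : |((exp (t * I) * ζ) ^ 2).im - ((exp (s * I) * ζ) ^ 2).im| ≤
      2 * |t - s| * normSq ζ := by
    rw [← sub_im, hfactor]
    refine (abs_im_le_norm _).trans ?_
    rw [norm_mul, norm_mul, norm_exp_ofReal_mul_I, one_mul, norm_pow, ← normSq_eq_norm_sq]
    refine mul_le_mul_of_nonneg_right ?_ (normSq_nonneg _)
    simpa [abs_mul] using Real.norm_exp_I_mul_ofReal_sub_one_le (x := 2 * (t - s))
  rw [Real.dist_eq, Real.dist_eq, discAngle, discAngle, Real.coe_toNNReal _ hK, hP, hP, ← sub_div,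
    ← sub_div, abs_div, abs_div, abs_of_pos hT, abs_two, div_mul_eq_mul_div]
  gcongr
  linarith

/-- The preimages of `ζ` are the points `exp (it) ζ`, `t` a fixed point of a contraction. -/
lemma bijOn_discSlide (c : ℝ) :
    BijOn (discSlide c) {z | normSq z < c / 2} {z | normSq z < c / 2} := by
  refine ⟨fun z hz => (normSq_discSlide c z).trans_lt hz, fun z hz w _ h => ?_, fun ζ hζ => ?_⟩
  · have hpolar {w : ℂ} (hw : discSlide c w = discSlide c z) : ∃ t,
        Function.IsFixedPt (discAngle c (discSlide c z)) t ∧ w = exp (t * I) * discSlide c z := by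
      have hw' : w = exp ((w.re * w.im / (c - normSq w) : ℝ) * I) * discSlide c z := by
        rw [← hw, discSlide, ← mul_assoc, ← exp_add]
        simp
      refine ⟨_, ?_, hw'⟩
      rw [Function.IsFixedPt, discAngle, ← hw', ← hw, normSq_discSlide]
    obtain ⟨t, ht, hzt⟩ := hpolar rfl
    obtain ⟨s, hs, hws⟩ := hpolar h.symm
    have hcontr := contractingWith_discAngle ((normSq_discSlide c z).trans_lt hz)
    rw [hzt, hws, hcontr.fixedPoint_unique' ht hs]
  · obtain ⟨t, ht⟩ : ∃ t, discAngle c ζ t = t :=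
      ⟨_, (contractingWith_discAngle hζ).fixedPoint_isFixedPt⟩
    have hN := normSq_exp_ofReal_mul_I_mul t ζ
    refine ⟨exp (t * I) * ζ, hN.trans_lt hζ, ?_⟩
    rw [discSlide, hN, ← discAngle, ht, ← mul_assoc, ← exp_add]
    simp

lemma discStretch_mem_ellipse (hz : normSq z < n) (hn : n ≤ c / 2) :
    discStretch c z ∈ ellipse (n * (c - n)) (π / 2 * n) := by
  have hn0 := (normSq_nonneg z).trans_lt hz
  have hcn : 0 < c - n := by linarith
  have hT : 0 < c - normSq z := by linarith
  have hS : n * (c - n) = n * (c - n) * (c - normSq z)⁻¹ / (c - normSq z)⁻¹ := by field_simp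
  rw [discStretch, hS, squeeze_mem_ellipse (inv_pos.2 hT)]
  refine ⟨by positivity, by positivity, ?_⟩
  have hlt : normSq z * (c - normSq z) < n * (c - n) := by nlinarith
  have hsq : (c - n) ^ 2 * z.im ^ 2 ≤ (c - normSq z) ^ 2 * z.im ^ 2 := by gcongr
  have hN : normSq z = z.re ^ 2 + z.im ^ 2 := by rw [normSq_apply, sq, sq]
  generalize normSq z = m at *
  field_simp
  nlinarith

lemma injOn_discStretch (c : ℝ) : InjOn (discStretch c) {z | normSq z < c / 2} := by
  have hle {z w : ℂ} (hw : normSq w < c / 2) (h : discStretch c z = discStretch c w) :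
      normSq w ≤ normSq z := by
    by_contra! hlt
    have hw0 := (normSq_nonneg z).trans_lt hlt
    have hcw : 0 < c - normSq w := by linarith
    have hmem := h ▸ discStretch_mem_ellipse hlt hw.le
    rw [← div_inv_eq_mul, discStretch, squeeze_mem_ellipse (inv_pos.2 hcw),
      mem_ellipse_round_iff hw0] at hmem
    exact hmem.false
  intro z hz w hw h
  have hN := (hle hz h.symm).antisymm (hle hw h)
  rw [discStretch, discStretch, hN] at h
  exact squeeze_injective (inv_pos.2 (by linarith [normSq_nonneg w, mem_ofPred_eq ▸ hw])) h

lemma exists_isSymplecticOn_disc_to_ellipses (c : ℝ) :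
    ∃ C : ℂ → ℂ, IsSymplecticOn stdSymp2 C {z | normSq z < c / 2} ∧
      ∀ n ≤ c / 2, MapsTo C {z | normSq z < n} (ellipse (n * (c - n)) (π / 2 * n)) := by
  set D := {z | normSq z < c / 2}
  have hD : IsOpen D := isOpen_lt differentiable_normSq.continuous continuous_const
  have hlt {z : ℂ} (hz : z ∈ D) : normSq z < c := by
    have hz' : normSq z < c / 2 := hz
    linarith [normSq_nonneg z]
  have hA := bijOn_discSlide c
  refine ⟨discStretch c ∘ Function.invFunOn (discSlide c) D, ?_, fun n hn z hz => ?_⟩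
  · have h := isSymplecticOn_comp_invFunOn (σ := stdSymp2) hD hA.injOn (injOn_discStretch c)
      (fun z hz => contDiffAt_discSlide (hlt hz)) (fun z hz => contDiffAt_discStretch (hlt hz))
      (fun z hz => isInvertible_fderiv_discSlide hz) fun z hz u v => by
        rw [stdSymp2_fderiv_discStretch (hlt hz), stdSymp2_fderiv_discSlide (hlt hz)]
    rwa [hA.image_eq] at h
  · refine discStretch_mem_ellipse ?_ hn
    have h := hA.invOn_invFunOn.2 (lt_of_lt_of_le (mem_ofPred_eq ▸ hz) hn)
    rw [← normSq_discSlide c, h]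
    exact hz

end DiscToEllipses

section BallEmbedding

lemma symplecticallyEmbeds_ellipses_of_discs {c : ℝ} {n : ℝ → ℝ} (hn : ∀ m, n m ≤ c / 2) :
    SymplecticallyEmbeds stdSymp4 {z | normSq z.1 < n (normSq z.2)}
      {z | z.2 ∈ ellipse (n (normSq z.1) * (c - n (normSq z.1))) (π / 2 * n (normSq z.1))} := by
  obtain ⟨C, hC, hmaps⟩ := exists_isSymplecticOn_disc_to_ellipses c
  have hprod := hC.prodMap (IsSymplecticOn.id stdSymp2 univ)
  exact ⟨Prod.swap ∘ Prod.map C id,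
    ((IsSymplecticOn.prodSwap stdSymp2 univ).comp hprod (mapsTo_univ _ _)).mono
      fun z hz => ⟨lt_of_lt_of_le (mem_ofPred_eq ▸ hz) (hn _), mem_univ _⟩,
    fun z hz => hmaps _ (hn _) hz⟩

/-- The fibre of the ball over `z₁` is a round disc, hence also one of the ellipses that can be
wrapped into annuli. -/
lemma symplecticallyEmbeds_ball_annuli :
    SymplecticallyEmbeds stdSymp4 (ball4 √(2 / π))
      {z | |π * normSq z.2 - 1| < 1 - π / 2 * normSq z.1} := by
  refine .trans (.of_subset _ fun z hz => ?_) (symplecticallyEmbeds_annuli_of_ellipses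
    (S := fun n => 2 / π - n) (k := fun n => 1 - π / 2 * n) (by fun_prop) fun n hn => ?_)
  · rw [ball4, mem_ofPred_eq, Real.sq_sqrt (by positivity)] at hz
    have hk : 1 - π / 2 * normSq z.1 = π / 2 * (2 / π - normSq z.1) := by field_simp
    rw [mem_ofPred_eq, hk, mem_ellipse_round_iff (by linarith [normSq_nonneg z.2])]
    linarith
  · exact sub_le_self 1 (by positivity)

lemma symplecticallyEmbeds_ball_l1 :
    SymplecticallyEmbeds stdSymp4 (ball4 √(2 / π))
      {z | |π * normSq z.1 - 1| + |π * normSq z.2 - 1| < 1} := by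
  let n (m : ℝ) : ℝ := 2 / π * (1 - |π * m - 1|)
  have habs (m : ℝ) : 1 - |π * m - 1| ≤ 1 := sub_le_self 1 (abs_nonneg _)
  have hn (m : ℝ) : n m ≤ 4 / π / 2 :=
    (mul_le_mul_of_nonneg_left (habs m) (by positivity)).trans_eq (by ring)
  have hS (m : ℝ) : n m * (4 / π - n m) = (2 / π) ^ 2 * (1 - (π * m - 1) ^ 2) := by
    rw [← sq_abs (π * m - 1)]
    ring
  have hk (m : ℝ) : π / 2 * n m = 1 - |π * m - 1| := by
    simp only [n]
    field_simp
  have hball : {z : ℂ × ℂ | |π * normSq z.2 - 1| < 1 - π / 2 * normSq z.1} ⊆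
      {z | normSq z.1 < n (normSq z.2)} := by
    intro z hz
    rw [mem_ofPred_eq] at hz ⊢
    refine lt_of_mul_lt_mul_left ?_ (by positivity : 0 ≤ π / 2)
    rw [hk]
    linarith
  have hdiscs := symplecticallyEmbeds_ellipses_of_discs hn
  simp only [hS, hk] at hdiscs
  have hannuli := symplecticallyEmbeds_annuli_of_ellipses
    (S := fun m => (2 / π) ^ 2 * (1 - (π * m - 1) ^ 2)) (by fun_prop) fun m _ => habs m
  have hl1 : {z : ℂ × ℂ | |π * normSq z.2 - 1| < 1 - |π * normSq z.1 - 1|} ⊆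
      {z | |π * normSq z.1 - 1| + |π * normSq z.2 - 1| < 1} :=
    fun z hz => (lt_sub_iff_add_lt'.1 hz : |π * normSq z.1 - 1| + _ < _)
  exact symplecticallyEmbeds_ball_annuli.trans <| .trans (.of_subset _ hball) <|
    hdiscs.trans <| hannuli.trans <| .of_subset _ hl1

end BallEmbedding

section GromovWidth

lemma sq_det_eq_one_of_preserves_bilinForm {R M : Type*} [CommRing R] [IsDomain R] [AddCommGroup M]
    [Module R M] [Module.Free R M] [Module.Finite R M] {B : LinearMap.BilinForm R M}
    (hB : B.Nondegenerate) {L : M →ₗ[R] M} (hL : ∀ u v, B (L u) (L v) = B u v) :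
    LinearMap.det L ^ 2 = 1 := by
  let b := Module.finBasis R M
  have hcomp : B.comp L L = B := LinearMap.ext₂ hL
  have hdet := congrArg Matrix.det (LinearMap.BilinForm.toMatrix_comp b b B L L)
  rw [hcomp, Matrix.det_mul, Matrix.det_mul, Matrix.det_transpose, LinearMap.det_toMatrix] at hdet
  refine mul_left_cancel₀ ((LinearMap.BilinForm.nondegenerate_iff_det_ne_zero b).1 hB) ?_
  linear_combination -hdet

/-- `stdSymp4` as a bilinear form. -/
def stdSymp4Form : LinearMap.BilinForm ℝ (ℂ × ℂ) :=
  LinearMap.mk₂ ℝ stdSymp4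
    (by intros; simp [stdSymp4]; ring) (by intros; simp [stdSymp4]; ring)
    (by intros; simp [stdSymp4]; ring) (by intros; simp [stdSymp4]; ring)

lemma nondegenerate_stdSymp4Form : stdSymp4Form.Nondegenerate := by
  refine LinearMap.BilinForm.Nondegenerate.ofSeparatingLeft fun u hu => ?_
  have him1 := hu (1, 0)
  have hre1 := hu (I, 0)
  have him2 := hu (0, 1)
  have hre2 := hu (0, I)
  simp only [stdSymp4Form, LinearMap.mk₂_apply, stdSymp4, mul_one, conj_im, mul_zero, zero_im,
    add_zero, neg_eq_zero, mul_im, conj_re, I_im, I_re, zero_add] at him1 hre1 him2 hre2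
  exact Prod.ext (Complex.ext hre1 him1) (Complex.ext hre2 him2)

instance : (volume : Measure (ℂ × ℂ)).IsAddHaarMeasure := Measure.prod.instIsAddHaarMeasure _ _

lemma SymplecticEmbeds4.volume_le {U V : Set (ℂ × ℂ)} (hU : MeasurableSet U)
    (h : SymplecticEmbeds4 U V) : volume U ≤ volume V := by
  obtain ⟨f, hf, hinj, hUV, hform⟩ := h
  have hdet : ∀ x ∈ U, ENNReal.ofReal |(fderivWithin ℝ f U x).det| = 1 := fun x hx => by
    have hsq := sq_det_eq_one_of_preserves_bilinForm nondegenerate_stdSymp4Form (hform x hx)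
    rw [← sq_abs] at hsq
    rw [ContinuousLinearMap.det, (pow_eq_one_iff_of_nonneg (abs_nonneg _) two_ne_zero).1 hsq,
      ENNReal.ofReal_one]
  calc volume U = ∫⁻ x in U, ENNReal.ofReal |(fderivWithin ℝ f U x).det| := by
        rw [setLIntegral_congr_fun hU hdet, setLIntegral_one]
    _ = volume (f '' U) := lintegral_abs_det_fderiv_eq_addHaar_image volume hU
        (fun x hx => ((hf x hx).differentiableWithinAt (by simp)).hasFDerivWithinAt) hinj
    _ ≤ volume V := measure_mono hUV.image_subset

lemma isOpen_ball4 (r : ℝ) : IsOpen (ball4 r) := by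
  have := differentiable_normSq.continuous
  exact isOpen_lt (by fun_prop) continuous_const

lemma volume_ball4 {r : ℝ} (hr : 0 < r) :
    volume (ball4 r) = ENNReal.ofReal (r ^ 4) * volume (ball4 1) := by
  have hsmul : ball4 r = r • ball4 1 := by
    ext z
    rw [mem_smul_set_iff_inv_smul_mem₀ hr.ne']
    simp only [ball4, normSq_apply, mem_ofPred_eq, one_pow, Prod.smul_fst, Prod.smul_snd, smul_re,
      smul_im, smul_eq_mul]
    field_simp
  rw [hsmul, Measure.addHaar_smul, abs_of_pos (by positivity)]
  simp

lemma bddAbove_gromovWidth4 {U : Set (ℂ × ℂ)} (hU : volume U ≠ ⊤) :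
    BddAbove {t : ℝ | ∃ r : ℝ, 0 < r ∧ t = π * r ^ 2 ∧ SymplecticEmbeds4 (ball4 r) U} := by
  have hball : volume (ball4 1) ≠ 0 :=
    ((isOpen_ball4 1).measure_pos volume ⟨0, by simp [ball4]⟩).ne'
  have hquot : volume U / volume (ball4 1) ≠ ⊤ := ENNReal.div_ne_top hU hball
  refine ⟨π * (1 + (volume U / volume (ball4 1)).toReal), ?_⟩
  rintro _ ⟨r, hr, rfl, hembeds⟩
  have hvol := hembeds.volume_le (isOpen_ball4 r).measurableSet
  rw [volume_ball4 hr, ← ENNReal.le_div_iff_mul_le (.inl hball) (.inr hU),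
    ENNReal.ofReal_le_iff_le_toReal hquot] at hvol
  gcongr
  nlinarith [sq_nonneg (r ^ 2 - 1)]

lemma SymplecticEmbeds4.le_gromovWidth4 {U : Set (ℂ × ℂ)} {r : ℝ} (hr : 0 < r)
    (h : SymplecticEmbeds4 (ball4 r) U) (hU : volume U ≠ ⊤) : π * r ^ 2 ≤ gromovWidth4 U :=
  le_csSup (bddAbove_gromovWidth4 hU) ⟨r, hr, rfl, h⟩

lemma isBounded_preimage_mu4 {P : Set (ℝ × ℝ)} (hP : Bornology.IsBounded P) :
    Bornology.IsBounded (mu4 ⁻¹' P) := by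
  obtain ⟨R, hR⟩ := hP.exists_norm_le
  refine isBounded_iff_forall_norm_le.2 ⟨1 + R, fun z hz => ?_⟩
  have hle {w : ℂ} (h : ‖π * normSq w‖ ≤ R) : ‖w‖ ≤ 1 + R := by
    rw [Real.norm_of_nonneg (mul_nonneg Real.pi_pos.le (normSq_nonneg w)), normSq_eq_norm_sq] at h
    nlinarith [Real.pi_gt_three, sq_nonneg (‖w‖ - 1)]
  exact max_le (hle ((norm_fst_le _).trans (hR _ hz))) (hle ((norm_snd_le _).trans (hR _ hz)))

lemma l1_closedBall_subset_convexHull :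
    {x : ℝ × ℝ | |x.1 - 1| + |x.2 - 1| ≤ 1} ⊆ convexHull ℝ {(1, 0), (2, 1), (1, 2), (0, 1)} := by
  intro x hx
  obtain ⟨hleft, hright⟩ := abs_le.1 (show |x.1 - 1| ≤ 1 - |x.2 - 1| from le_sub_iff_add_le.2 hx)
  have hdown := neg_abs_le (x.2 - 1)
  have hup := le_abs_self (x.2 - 1)
  let vertex : Fin 4 → ℝ × ℝ := ![(1, 0), (2, 1), (1, 2), (0, 1)]
  let weight : Fin 4 → ℝ := ![(|x.2 - 1| - (x.2 - 1)) / 2, (1 - |x.2 - 1| + (x.1 - 1)) / 2,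
    (|x.2 - 1| + (x.2 - 1)) / 2, (1 - |x.2 - 1| - (x.1 - 1)) / 2]
  have hweight : ∀ i, 0 ≤ weight i := by
    intro i
    fin_cases i <;> dsimp [weight] <;> linarith
  have hsum : ∑ i, weight i = 1 := by
    simp only [Fin.sum_univ_four, Matrix.cons_val_zero, Matrix.cons_val_one, Matrix.cons_val,
      weight]
    ring
  have hcomb : ∑ i, weight i • vertex i = x := by
    ext <;> simp [Fin.sum_univ_four, weight, vertex] <;> ring
  rw [← hcomb]
  refine (convex_convexHull ℝ _).sum_mem (fun i _ => hweight i) hsum fun i _ =>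
    subset_convexHull ℝ _ ?_
  fin_cases i <;> simp [vertex]

end GromovWidth

end Development

/-- For `Q = conv{(1,0),(2,1),(1,2),(0,1)}`, the open ball `B⁴(√(2/π))` (of Gromov
area `2`) symplectically embeds into `X_{int(Q)} = μ⁻¹(interior Q)`; in particular
the Gromov width of `X_{int(Q)}` is at least `2`. -/
theorem ball_embeds_into_shifted_l1_codisc
    (Q : Set (ℝ × ℝ))
    (hQ : Q = convexHull ℝ {((1 : ℝ), (0 : ℝ)), (2, 1), (1, 2), (0, 1)}) :
    SymplecticEmbeds4 (ball4 (Real.sqrt (2 / Real.pi))) (mu4 ⁻¹' interior Q) ∧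
    2 ≤ gromovWidth4 (mu4 ⁻¹' interior Q) := by
  have hl1 : mu4 ⁻¹' {x | |x.1 - 1| + |x.2 - 1| < 1} ⊆ mu4 ⁻¹' interior Q := by
    refine preimage_mono (interior_maximal ?_ (isOpen_lt (by fun_prop) (by fun_prop)))
    exact hQ ▸ (ofPred_subset_ofPred.2 fun _ => le_of_lt).trans l1_closedBall_subset_convexHull
  have hembeds : SymplecticEmbeds4 (ball4 √(2 / Real.pi)) (mu4 ⁻¹' interior Q) :=
    (symplecticallyEmbeds_ball_l1.trans (.of_subset _ hl1)).symplecticEmbeds4 (isOpen_ball4 _)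
  have hbounded : Bornology.IsBounded (mu4 ⁻¹' interior Q) := by
    refine isBounded_preimage_mu4 (.subset ?_ interior_subset)
    exact hQ ▸ isBounded_convexHull.2 (Set.toFinite _).isBounded
  refine ⟨hembeds, ?_⟩
  have hwidth := hembeds.le_gromovWidth4 (by positivity) hbounded.measure_lt_top.ne
  rwa [Real.sq_sqrt (by positivity), mul_div_cancel₀ _ Real.pi_ne_zero] at hwidth
end
end

section
/- There exists ε₀ > 0 such that for every ε ∈ (0, ε₀) there is a smooth injective map σ : B²(1−ε) → ℝ² satisfying: (i) det Dσ(z) = 1 for every z ∈ B²(1−ε) (σ is area-preserving); (ii) the image of σ is contained in the slit disc SD(1) := B²(1) ∖ {(x,0) : x ≥ 0}; and (iii) |σ(z)|² ≤ |z|² + ε³ for every z ∈ B²(1−ε). -/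
open Set

noncomputable section

/-- The open Euclidean disc of radius `r` centered at the origin of `ℝ²`. -/
def disc2 (r : ℝ) : Set (ℝ × ℝ) := {z | z.1 ^ 2 + z.2 ^ 2 < r ^ 2}

/-- The slit disc `SD(r)`: the open disc of radius `r` with the closed nonnegative
`x`-axis removed. -/
def slitDisc (r : ℝ) : Set (ℝ × ℝ) := disc2 r \ {z | 0 ≤ z.1 ∧ z.2 = 0}

/-!
Shearing the plane horizontally by a nonnegative function `g` which is steep at `y = 0` pushes
everything outside a thin neighbourhood of the `x`-axis far to the left, while fixing the axis.
Next comes the area-preserving lift `(x, y) ↦ (φ x, y / φ' x)` of a diffeomorphism `φ` from the line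
onto the negative half-line that is close to the identity far to the left. Undoing the shear yields
a map which sends the `x`-axis into its negative half, hence avoids the slit altogether, and which
is almost the identity away from the axis. For `φ t = t - δ log (1 + exp (t / δ))` and
`g y = δ log √(1 + (y / η)²)` the vertical stretching `1 / φ'` is exactly balanced by the
logarithmic growth of `g`, so that the abscissa never increases; on a given disc both coordinates
then grow by at most `δ` in absolute value once `η` is small.
-/

section VolumePreserving

open scoped ContDiff

/-- A smooth injective self-map of a normed space whose derivative has determinant one everywhere;
on the plane, an area-preserving embedding. In infinite dimension the determinant condition says
nothing, as `LinearMap.det` then defaults to `1`. -/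
structure IsVolumePreservingEmbedding {E : Type*} [NormedAddCommGroup E] [NormedSpace ℝ E]
    (σ : E → E) : Prop where
  contDiff : ContDiff ℝ ∞ σ
  injective : Function.Injective σ
  det_fderiv (z : E) : (fderiv ℝ σ z).det = 1

theorem IsVolumePreservingEmbedding.comp {E : Type*} [NormedAddCommGroup E] [NormedSpace ℝ E]
    {σ τ : E → E} (hσ : IsVolumePreservingEmbedding σ) (hτ : IsVolumePreservingEmbedding τ) :
    IsVolumePreservingEmbedding (σ ∘ τ) where
  contDiff := hσ.contDiff.comp hτ.contDiff
  injective := hσ.injective.comp hτ.injective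
  det_fderiv z := by
    have chain : fderiv ℝ (σ ∘ τ) z = (fderiv ℝ σ (τ z)).comp (fderiv ℝ τ z) :=
      fderiv_comp z (hσ.contDiff.differentiable (by simp) _)
        (hτ.contDiff.differentiable (by simp) _)
    calc (fderiv ℝ (σ ∘ τ) z).det
        = (fderiv ℝ σ (τ z)).det * (fderiv ℝ τ z).det := by
          rw [chain]
          exact LinearMap.det_comp _ _
      _ = 1 := by rw [hσ.det_fderiv, hτ.det_fderiv, one_mul]

theorem det_eq_of_prod_self {R : Type*} [CommRing R] (L : R × R →ₗ[R] R × R) :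
    LinearMap.det L = (L (1, 0)).1 * (L (0, 1)).2 - (L (0, 1)).1 * (L (1, 0)).2 := by
  rw [← LinearMap.det_toMatrix (Module.Basis.finTwoProd R), Matrix.det_fin_two]
  simp [LinearMap.toMatrix_apply]

/-- The horizontal shear of the plane with profile `g`. -/
def shear (g : ℝ → ℝ) (z : ℝ × ℝ) : ℝ × ℝ := (z.1 + g z.2, z.2)

theorem isVolumePreservingEmbedding_shear {g : ℝ → ℝ} (hg : ContDiff ℝ ∞ g) :
    IsVolumePreservingEmbedding (shear g) where
  contDiff := by unfold shear; fun_prop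
  injective := by
    rintro ⟨x, y⟩ ⟨x', y'⟩ h
    simp only [shear, Prod.mk.injEq] at h
    obtain ⟨hx, rfl⟩ := h
    rw [add_right_cancel hx]
  det_fderiv z := by
    have hg' : HasFDerivAt (fun w : ℝ × ℝ => g w.2) (deriv g z.2 • .snd ℝ ℝ ℝ) z :=
      ((hg.differentiable (by simp) z.2).hasDerivAt).comp_hasFDerivAt z hasFDerivAt_snd
    have hshear : HasFDerivAt (shear g) _ z := (hasFDerivAt_fst.add hg').prodMk hasFDerivAt_snd
    rw [hshear.fderiv, ContinuousLinearMap.det, det_eq_of_prod_self]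
    simp

/-- The lift `(x, y) ↦ (φ x, y / φ' x)` of `φ` to the plane, seen as the cotangent bundle of the
line. -/
def cotangentLift (φ : ℝ → ℝ) (z : ℝ × ℝ) : ℝ × ℝ := (φ z.1, z.2 / deriv φ z.1)

theorem isVolumePreservingEmbedding_cotangentLift {φ : ℝ → ℝ} (hφ : ContDiff ℝ ∞ φ)
    (hpos : ∀ x, 0 < deriv φ x) : IsVolumePreservingEmbedding (cotangentLift φ) where
  contDiff := by
    have hφ' : ContDiff ℝ ∞ (deriv φ) := (contDiff_infty_iff_deriv.1 hφ).2
    exact (hφ.comp contDiff_fst).prodMk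
      (contDiff_snd.div (hφ'.comp contDiff_fst) fun z => (hpos z.1).ne')
  injective := by
    rintro ⟨x, y⟩ ⟨x', y'⟩ h
    simp only [cotangentLift, Prod.mk.injEq] at h
    obtain ⟨hx, hy⟩ := h
    obtain rfl := (strictMono_of_deriv_pos hpos).injective hx
    rw [(div_left_inj' (hpos x).ne').1 hy]
  det_fderiv z := by
    have hφ' : Differentiable ℝ (deriv φ) :=
      (contDiff_infty_iff_deriv.1 hφ).2.differentiable (by simp)
    have hfst : HasFDerivAt (fun w : ℝ × ℝ => φ w.1) (deriv φ z.1 • .fst ℝ ℝ ℝ) z :=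
      (hφ.differentiable (by simp) z.1).hasDerivAt.comp_hasFDerivAt z hasFDerivAt_fst
    have hinv : HasFDerivAt (fun w : ℝ × ℝ => (deriv φ w.1)⁻¹)
        (deriv (fun x => (deriv φ x)⁻¹) z.1 • .fst ℝ ℝ ℝ) z :=
      ((hφ' z.1).inv (hpos z.1).ne').hasDerivAt.comp_hasFDerivAt z hasFDerivAt_fst
    have hlift : HasFDerivAt (cotangentLift φ) _ z := hfst.prodMk (hasFDerivAt_snd.mul hinv)
    rw [hlift.fderiv, ContinuousLinearMap.det, det_eq_of_prod_self]
    simp [(hpos z.1).ne']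

end VolumePreserving

section Softplus

open Real
open scoped ContDiff

variable {δ : ℝ}

/-- The softplus function `δ log (1 + exp (t / δ))`, a smoothing of the positive part of `t`. -/
def softplus (δ t : ℝ) : ℝ := δ * log (1 + exp (t / δ))

theorem contDiff_softplus (δ : ℝ) : ContDiff ℝ ∞ (softplus δ) :=
  contDiff_const.mul ((contDiff_const.add (contDiff_id.div_const δ).exp).log
    fun t => by positivity)

theorem hasDerivAt_softplus (hδ : δ ≠ 0) (t : ℝ) :
    HasDerivAt (softplus δ) (exp (t / δ) / (1 + exp (t / δ))) t := by
  have h := ((((hasDerivAt_id t).div_const δ).exp.const_add 1).log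
    (by positivity)).const_mul δ
  refine h.congr_deriv ?_
  simp only [id]
  field_simp

theorem lt_softplus (hδ : 0 < δ) (t : ℝ) : t < softplus δ t := by
  have h : t / δ < log (1 + exp (t / δ)) := by
    rw [lt_log_iff_exp_lt (by positivity)]
    linarith
  rwa [div_lt_iff₀' hδ] at h

theorem softplus_mono (hδ : 0 ≤ δ) : Monotone (softplus δ) := by
  intro s t hst
  unfold softplus
  gcongr

theorem softplus_le (hδ : 0 < δ) (t : ℝ) : softplus δ t ≤ max t 0 + δ := by
  have h : log (1 + exp (t / δ)) ≤ max t 0 / δ + 1 := by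
    rw [log_le_iff_le_exp (by positivity), exp_add]
    have h₁ : 1 ≤ exp (max t 0 / δ) := one_le_exp (by positivity)
    have h₂ : exp (t / δ) ≤ exp (max t 0 / δ) := by gcongr; exact le_max_left t 0
    nlinarith [add_one_le_exp (1 : ℝ)]
  calc softplus δ t ≤ δ * (max t 0 / δ + 1) := by unfold softplus; gcongr
    _ = max t 0 + δ := by field_simp

/-- A diffeomorphism from the line onto the negative half-line, asymptotic to the identity at
`-∞`. -/
def compressNeg (δ t : ℝ) : ℝ := t - softplus δ t

theorem contDiff_compressNeg (δ : ℝ) : ContDiff ℝ ∞ (compressNeg δ) :=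
  contDiff_id.sub (contDiff_softplus δ)

theorem compressNeg_neg (hδ : 0 < δ) (t : ℝ) : compressNeg δ t < 0 :=
  sub_neg.2 (lt_softplus hδ t)

theorem deriv_compressNeg (hδ : δ ≠ 0) (t : ℝ) :
    deriv (compressNeg δ) t = (1 + exp (t / δ))⁻¹ := by
  have h : HasDerivAt (compressNeg δ) _ t := (hasDerivAt_id t).sub (hasDerivAt_softplus hδ t)
  rw [h.deriv]
  field_simp
  ring

theorem neg_abs_sub_le_compressNeg (hδ : 0 < δ) (t : ℝ) : -|t| - δ ≤ compressNeg δ t := by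
  have h : max t 0 ≤ t + |t| := max_le (by linarith [abs_nonneg t]) (by linarith [neg_abs_le t])
  unfold compressNeg
  linarith [softplus_le hδ t]

end Softplus

section LogWell

open Real
open scoped ContDiff

variable {δ η : ℝ}

/-- The even function `δ log √(1 + (y / η)²)`, the profile of the conjugating shear; it vanishes
at `0`, and its well there is narrower the smaller `η` is. -/
def logWell (δ η y : ℝ) : ℝ := δ * log √(1 + (y / η) ^ 2)

theorem contDiff_logWell (δ η : ℝ) : ContDiff ℝ ∞ (logWell δ η) := by
  have h : ContDiff ℝ ∞ fun y : ℝ => 1 + (y / η) ^ 2 := by fun_prop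
  exact contDiff_const.mul ((h.sqrt fun y => by positivity).log fun y => by positivity)

theorem logWell_zero (δ η : ℝ) : logWell δ η 0 = 0 := by simp [logWell]

theorem logWell_nonneg (hδ : 0 ≤ δ) (η y : ℝ) : 0 ≤ logWell δ η y :=
  mul_nonneg hδ (log_nonneg (one_le_sqrt.2 (by linarith [sq_nonneg (y / η)])))

theorem logWell_le_logWell_mul (hδ : 0 ≤ δ) (η y : ℝ) {c : ℝ} (hc : 1 ≤ c) :
    logWell δ η y ≤ logWell δ η (y * c) := by
  unfold logWell
  rw [mul_div_right_comm, mul_pow]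
  gcongr
  exact le_mul_of_one_le_right (by positivity) (one_le_pow₀ hc)

theorem logWell_mul_le (hδ : 0 ≤ δ) (η y : ℝ) {c : ℝ} (hc : 1 ≤ c) :
    logWell δ η (y * c) ≤ logWell δ η y + δ * log c := by
  have hsqrt : √(1 + (y * c / η) ^ 2) ≤ √(1 + (y / η) ^ 2) * c := by
    rw [sqrt_le_left (by positivity), mul_pow, sq_sqrt (by positivity), mul_div_right_comm, mul_pow]
    nlinarith [one_le_pow₀ hc (n := 2)]
  calc logWell δ η (y * c) ≤ δ * log (√(1 + (y / η) ^ 2) * c) := by unfold logWell; gcongr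
    _ = logWell δ η y + δ * log c := by
      rw [log_mul (by positivity) (by positivity), mul_add, logWell]

theorem abs_mul_exp_neg_logWell_le (hδ : δ ≠ 0) (hη : 0 < η) (y : ℝ) :
    |y| * exp (-logWell δ η y / δ) ≤ η := by
  have hexp : exp (-logWell δ η y / δ) = (√(1 + (y / η) ^ 2))⁻¹ := by
    rw [neg_div, exp_neg, logWell, mul_div_cancel_left₀ _ hδ, exp_log (by positivity)]
  have habs : |y / η| ≤ √(1 + (y / η) ^ 2) := abs_le_sqrt (by linarith)
  rw [abs_div, abs_of_pos hη, div_le_iff₀' hη] at habs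
  rwa [hexp, ← div_eq_mul_inv, div_le_iff₀ (by positivity)]

end LogWell

section SlitEmbedding

open Real

variable {δ η : ℝ}

/-- The area-preserving embedding of the plane into the complement of the slit: the lift of
`compressNeg δ`, conjugated by the shear with profile `logWell δ η`. -/
def slitEmbedding (δ η : ℝ) : ℝ × ℝ → ℝ × ℝ :=
  shear (logWell δ η) ∘ cotangentLift (compressNeg δ) ∘ shear (-logWell δ η)

theorem isVolumePreservingEmbedding_slitEmbedding (hδ : δ ≠ 0) (η : ℝ) :
    IsVolumePreservingEmbedding (slitEmbedding δ η) := by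
  have hpos (x : ℝ) : 0 < deriv (compressNeg δ) x := by
    rw [deriv_compressNeg hδ]
    positivity
  have hwell := contDiff_logWell δ η
  exact (isVolumePreservingEmbedding_shear hwell).comp
    ((isVolumePreservingEmbedding_cotangentLift (contDiff_compressNeg δ) hpos).comp
      (isVolumePreservingEmbedding_shear hwell.neg))

theorem slitEmbedding_fst (δ η : ℝ) (z : ℝ × ℝ) :
    (slitEmbedding δ η z).1 =
      compressNeg δ (z.1 - logWell δ η z.2) + logWell δ η (slitEmbedding δ η z).2 :=
  rfl

theorem slitEmbedding_snd (hδ : δ ≠ 0) (η : ℝ) (z : ℝ × ℝ) :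
    (slitEmbedding δ η z).2 = z.2 * (1 + exp ((z.1 - logWell δ η z.2) / δ)) := by
  simp [slitEmbedding, shear, cotangentLift, deriv_compressNeg hδ, sub_eq_add_neg]

theorem slitEmbedding_notMem_slit (hδ : 0 < δ) (η : ℝ) (z : ℝ × ℝ) :
    ¬(0 ≤ (slitEmbedding δ η z).1 ∧ (slitEmbedding δ η z).2 = 0) := by
  rintro ⟨hfst, hsnd⟩
  rw [slitEmbedding_fst, hsnd, logWell_zero, add_zero] at hfst
  exact hfst.not_gt (compressNeg_neg hδ _)

theorem slitEmbedding_fst_le (hδ : 0 < δ) (η : ℝ) (z : ℝ × ℝ) :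
    (slitEmbedding δ η z).1 ≤ z.1 := by
  have h := logWell_mul_le hδ.le η z.2
    (le_add_of_nonneg_right (exp_pos ((z.1 - logWell δ η z.2) / δ)).le)
  rw [slitEmbedding_fst, slitEmbedding_snd hδ.ne', compressNeg, softplus]
  linarith

theorem compressNeg_le_slitEmbedding_fst (hδ : 0 < δ) (η : ℝ) (z : ℝ × ℝ) :
    compressNeg δ z.1 ≤ (slitEmbedding δ η z).1 := by
  have hwell := logWell_le_logWell_mul hδ.le η z.2
    (le_add_of_nonneg_right (exp_pos ((z.1 - logWell δ η z.2) / δ)).le)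
  have hsoft := softplus_mono hδ.le (sub_le_self z.1 (logWell_nonneg hδ.le η z.2))
  rw [slitEmbedding_fst, slitEmbedding_snd hδ.ne', compressNeg, compressNeg]
  linarith

theorem abs_slitEmbedding_fst_le (hδ : 0 < δ) (η : ℝ) (z : ℝ × ℝ) :
    |(slitEmbedding δ η z).1| ≤ |z.1| + δ := by
  rw [abs_le]
  constructor
  · linarith [neg_abs_sub_le_compressNeg hδ z.1, compressNeg_le_slitEmbedding_fst hδ η z]
  · linarith [slitEmbedding_fst_le hδ η z, le_abs_self z.1]

theorem abs_slitEmbedding_snd_le (hδ : δ ≠ 0) (hη : 0 < η) (z : ℝ × ℝ) :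
    |(slitEmbedding δ η z).2| ≤ |z.2| + η * exp (z.1 / δ) := by
  have hstretch : |z.2| * exp ((z.1 - logWell δ η z.2) / δ) ≤ η * exp (z.1 / δ) :=
    calc |z.2| * exp ((z.1 - logWell δ η z.2) / δ)
        = |z.2| * exp (-logWell δ η z.2 / δ) * exp (z.1 / δ) := by
          rw [mul_assoc, ← exp_add]
          ring_nf
      _ ≤ η * exp (z.1 / δ) := by
          gcongr
          exact abs_mul_exp_neg_logWell_le hδ hη z.2
  rw [slitEmbedding_snd hδ, abs_mul, abs_of_pos (a := 1 + exp _) (by positivity)]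
  linarith

end SlitEmbedding

theorem sq_le_sq_add_of_abs_le_add {a b r δ : ℝ} (hδ₀ : 0 ≤ δ) (hδ₁ : δ ≤ 1) (hb : |b| ≤ r)
    (hab : |a| ≤ |b| + δ) : a ^ 2 ≤ b ^ 2 + (2 * r + 1) * δ :=
  calc a ^ 2 ≤ (|b| + δ) ^ 2 := sq_le_sq.2 (hab.trans (le_abs_self _))
    _ = b ^ 2 + (2 * |b| + δ) * δ := by rw [add_sq, sq_abs]; ring
    _ ≤ b ^ 2 + (2 * r + 1) * δ := by gcongr

theorem exists_slit_disc_embedding_general (r : ℝ) {κ : ℝ} (hκ : 0 < κ) :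
    ∃ σ : ℝ × ℝ → ℝ × ℝ, IsVolumePreservingEmbedding σ ∧
      (∀ z, ¬(0 ≤ (σ z).1 ∧ (σ z).2 = 0)) ∧
      ∀ z ∈ disc2 r, (σ z).1 ^ 2 + (σ z).2 ^ 2 ≤ z.1 ^ 2 + z.2 ^ 2 + κ := by
  obtain ⟨δ, hδ, hδ₁, hδκ⟩ : ∃ δ : ℝ, 0 < δ ∧ δ ≤ 1 ∧ 2 * ((2 * |r| + 1) * δ) ≤ κ := by
    refine ⟨min 1 (κ / (2 * (2 * |r| + 1))), by positivity, min_le_left _ _, ?_⟩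
    rw [← mul_assoc, ← le_div_iff₀' (by positivity)]
    exact min_le_right _ _
  obtain ⟨η, hη, hηδ⟩ : ∃ η : ℝ, 0 < η ∧ η * Real.exp (|r| / δ) ≤ δ :=
    ⟨δ / Real.exp (|r| / δ), by positivity, by field_simp; rfl⟩
  refine ⟨slitEmbedding δ η, isVolumePreservingEmbedding_slitEmbedding hδ.ne' η,
    slitEmbedding_notMem_slit hδ η, ?_⟩
  intro z (hz : z.1 ^ 2 + z.2 ^ 2 < r ^ 2)
  have hfst : |z.1| ≤ |r| := sq_le_sq.1 (by linarith [sq_nonneg z.2])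
  have hsnd : |z.2| ≤ |r| := sq_le_sq.1 (by linarith [sq_nonneg z.1])
  have hstretch : η * Real.exp (z.1 / δ) ≤ δ :=
    calc η * Real.exp (z.1 / δ) ≤ η * Real.exp (|r| / δ) := by
          gcongr
          exact (le_abs_self _).trans hfst
      _ ≤ δ := hηδ
  have hsnd' := (abs_slitEmbedding_snd_le hδ.ne' hη z).trans
    (add_le_add_right hstretch |z.2|)
  have hfst_sq := sq_le_sq_add_of_abs_le_add hδ.le hδ₁ hfst (abs_slitEmbedding_fst_le hδ η z)
  have hsnd_sq := sq_le_sq_add_of_abs_le_add hδ.le hδ₁ hsnd hsnd'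
  linarith

/-- There is `ε₀ > 0` such that for every `ε ∈ (0, ε₀)` there exists a smooth injective
area-preserving map `σ : B²(1-ε) → SD(1)` with `|σ(z)|² ≤ |z|² + ε³` on `B²(1-ε)`. -/
theorem exists_slit_disc_embedding :
    ∃ ε₀ : ℝ, 0 < ε₀ ∧ ∀ ε : ℝ, 0 < ε → ε < ε₀ →
      ∃ σ : ℝ × ℝ → ℝ × ℝ,
        ContDiffOn ℝ (⊤ : ℕ∞) σ (disc2 (1 - ε)) ∧
        Set.InjOn σ (disc2 (1 - ε)) ∧
        (∀ z ∈ disc2 (1 - ε), σ z ∈ slitDisc 1) ∧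
        (∀ z ∈ disc2 (1 - ε), LinearMap.det (fderiv ℝ σ z).toLinearMap = 1) ∧
        (∀ z ∈ disc2 (1 - ε), (σ z).1 ^ 2 + (σ z).2 ^ 2 ≤ z.1 ^ 2 + z.2 ^ 2 + ε ^ 3) := by
  refine ⟨1, one_pos, fun ε hε hε₁ => ?_⟩
  obtain ⟨σ, hσ, hslit, hnorm⟩ := exists_slit_disc_embedding_general (1 - ε) (pow_pos hε 3)
  refine ⟨σ, hσ.contDiff.contDiffOn, hσ.injective.injOn, fun z hz => ⟨?_, hslit z⟩,
    fun z _ => hσ.det_fderiv z, hnorm⟩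
  have hradius : (1 - ε) ^ 2 + ε ^ 3 < 1 ^ 2 := by
    nlinarith [mul_pos hε (sub_pos.2 hε₁), mul_pos (pow_pos hε 2) (sub_pos.2 hε₁)]
  exact (hnorm z hz).trans_lt ((add_lt_add_left hz _).trans hradius)
end
end
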